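/- Let Θ be a finite set with at least two elements. For every family (d_{ij})_{i≠j, i,j∈Θ} of strictly positive real numbers there exists a family (μ_i)_{i∈Θ} of mutually absolutely continuous Borel probability measures on ℝ such that all divergences D(μ_i‖μ_j) are finite and D(μ_i‖μ_j) = d_{ij} for every ordered pair of distinct states i ≠ j. -/

import Mathlib

/-!
Mixing experiments over disjoint alphabets makes the matrix of divergences a convex combination of
the individual matrices, and an experiment that does not depend on the state contributes `0`.
Hence it suffices to find, for every ordered pair `e = (i, j)`, binary experiments whose matrix of
divergences tends to `L • E_{ij}`, where `L` exceeds the sum of all targets. The success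
probabilities are `t` in state `i`, `exp (-L / t)` in state `j` and `t ^ 2` in every other state:
as `t → 0⁺`, the divergence of success probability `a` from `b` has the same limit as
`-a * log b`, which is `L` for `(a, b) = (t, exp (-L / t))` and `0` for all other relevant pairs
(`tendsto_binKL_prob`).

The matrix `M t` whose columns are these (flattened) divergence matrices divided by `L` tends to the
identity, so for small `t` the solution of `M t *ᵥ c = d` is close to `d`
(`eventually_exists_mulVec_eq`). It is thus positive with sum below `L`, and `c / L` gives the
mixture weights, the remaining mass being put on a trivial experiment. The resulting finitely
supported laws are transported to `ℝ` as sums of Dirac masses.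
-/

open MeasureTheory
open scoped ENNReal Classical

/-- The Kullback–Leibler divergence `D(μ‖ν) = ∫ log (dμ/dν) dμ ∈ [0,∞]`, set to `∞`
when `μ` is not absolutely continuous w.r.t. `ν` or the log-likelihood ratio is not
integrable (in which case the integral is `+∞`, since the negative part of the
log-likelihood ratio is always integrable for probability measures). -/
noncomputable def klDiv {S : Type*} [MeasurableSpace S] (μ ν : Measure S) : ℝ≥0∞ :=
  if μ ≪ ν ∧ Integrable (fun s => Real.log ((μ.rnDeriv ν) s).toReal) μ
  then ENNReal.ofReal (∫ s, Real.log ((μ.rnDeriv ν) s).toReal ∂μ)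
  else ⊤

open Filter Topology

/-- The law on `ℝ` giving mass `p s` to the point `f s`. -/
noncomputable def atomic {S : Type*} [Fintype S] (f : S → ℝ) (p : S → ℝ) : Measure ℝ :=
  ∑ s, ENNReal.ofReal (p s) • Measure.dirac (f s)

lemma atomic_singleton {S : Type*} [Fintype S] {f : S → ℝ} (hf : Function.Injective f)
    (p : S → ℝ) (s : S) : atomic f p {f s} = ENNReal.ofReal (p s) := by
  simp only [atomic, Measure.finsetSum_apply, Measure.smul_apply, smul_eq_mul,
    MeasurableSet.singleton, Measure.dirac_apply', Set.indicator, Set.mem_singleton_iff, hf.eq_iff]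
  simp

lemma isProbabilityMeasure_atomic {S : Type*} [Fintype S] (f : S → ℝ) {p : S → ℝ}
    (hp : ∀ s, 0 < p s) (h1 : ∑ s, p s = 1) : IsProbabilityMeasure (atomic f p) := by
  constructor
  simp only [atomic, Measure.finsetSum_apply, Measure.smul_apply, smul_eq_mul, measure_univ, mul_one]
  rw [← ENNReal.ofReal_sum_of_nonneg fun s _ => (hp s).le, h1, ENNReal.ofReal_one]

lemma atomic_ac {S : Type*} [Fintype S] (f : S → ℝ) (p : S → ℝ) {q : S → ℝ} (hq : ∀ s, 0 < q s) :
    atomic f p ≪ atomic f q := by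
  intro A hA
  simp only [atomic, Measure.finsetSum_apply, Measure.smul_apply, smul_eq_mul,
    Finset.sum_eq_zero_iff, Finset.mem_univ, true_implies, mul_eq_zero] at hA ⊢
  intro s
  refine Or.inr ((hA s).resolve_left ?_)
  simpa using hq s

lemma klDiv_atomic {S : Type*} [Fintype S] {f : S → ℝ} (hf : Function.Injective f) {p q : S → ℝ}
    (hp : ∀ s, 0 < p s) (hq : ∀ s, 0 < q s) (hp1 : ∑ s, p s = 1) (hq1 : ∑ s, q s = 1) :
    klDiv (atomic f p) (atomic f q) = ENNReal.ofReal (∑ s, p s * Real.log (p s / q s)) := by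
  have := isProbabilityMeasure_atomic f hp hp1
  have := isProbabilityMeasure_atomic f hq hq1
  have hac : atomic f p ≪ atomic f q := atomic_ac f p hq
  have hrn : ∀ s, (((atomic f p).rnDeriv (atomic f q)) (f s)).toReal = p s / q s := by
    intro s
    have h := Measure.setLIntegral_rnDeriv hac {f s}
    rw [lintegral_singleton, atomic_singleton hf, atomic_singleton hf] at h
    have h2 := congrArg ENNReal.toReal h
    rw [ENNReal.toReal_mul, ENNReal.toReal_ofReal (hq s).le, ENNReal.toReal_ofReal (hp s).le] at h2
    rw [eq_div_iff (hq s).ne', h2]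
  have hint : ∀ (g : ℝ → ℝ) (s : S),
      Integrable g (ENNReal.ofReal (p s) • Measure.dirac (f s)) := by
    intro g s
    exact (integrable_dirac (by simp)).smul_measure (by simp)
  have hI : Integrable (fun x => Real.log (((atomic f p).rnDeriv (atomic f q)) x).toReal)
      (atomic f p) := by
    rw [atomic, integrable_finsetSum_measure]
    exact fun s _ => hint _ s
  rw [klDiv, if_pos ⟨hac, hI⟩]
  congr 1
  generalize hg : (fun x => Real.log (((atomic f p).rnDeriv (atomic f q)) x).toReal) = g
  have hgs : ∀ s, g (f s) = Real.log (p s / q s) := fun s => by rw [← hg, ← hrn s]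
  rw [atomic, integral_finsetSum_measure fun s _ => hint _ s]
  refine Finset.sum_congr rfl fun s _ => ?_
  rw [integral_smul_measure, integral_dirac, ENNReal.toReal_ofReal (hp s).le, smul_eq_mul, hgs]

/-- The divergence between the Bernoulli laws with success probabilities `a` and `b`. -/
noncomputable def binKL (a b : ℝ) : ℝ :=
  a * Real.log (a / b) + (1 - a) * Real.log ((1 - a) / (1 - b))

lemma tendsto_binKL {l : Filter ℝ} {a b : ℝ → ℝ} {m : ℝ} (ha : Tendsto a l (𝓝 0))
    (hb : Tendsto b l (𝓝 0)) (ha0 : ∀ᶠ t in l, 0 < a t) (hb0 : ∀ᶠ t in l, 0 < b t)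
    (h : Tendsto (fun t => a t * Real.log (b t)) l (𝓝 (-m))) :
    Tendsto (fun t => binKL (a t) (b t)) l (𝓝 m) := by
  have h1 : Tendsto (fun t => a t * Real.log (a t)) l (𝓝 0) := by
    simpa [Function.comp_def] using (Real.continuous_mul_log.tendsto 0).comp ha
  have ha' : Tendsto (fun t => 1 - a t) l (𝓝 1) := by simpa using ha.const_sub 1
  have hb' : Tendsto (fun t => 1 - b t) l (𝓝 1) := by simpa using hb.const_sub 1
  have h2 : Tendsto (fun t => (1 - a t) * Real.log ((1 - a t) / (1 - b t))) l (𝓝 0) := by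
    simpa using ha'.mul ((ha'.div hb' one_ne_zero).log (by norm_num))
  have h3 := (h1.sub h).add h2
  rw [show (0 : ℝ) - -m + 0 = m by ring] at h3
  refine h3.congr' ?_
  filter_upwards [ha0, hb0] with t hat hbt
  rw [binKL, Real.log_div hat.ne' hbt.ne']
  ring

/-- The success probability in state `k` of the binary experiment that separates state `i` from
state `j` at scale `L`; only the divergence of `i` from `j` survives as `t → 0⁺`. -/
noncomputable def prob {Θ : Type*} (L : ℝ) (i j k : Θ) (t : ℝ) : ℝ :=
  if k = i then t else if k = j then Real.exp (-(L / t)) else t ^ 2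

lemma prob_pos {Θ : Type*} (L : ℝ) (i j k : Θ) {t : ℝ} (ht : 0 < t) : 0 < prob L i j k t := by
  unfold prob
  split_ifs <;> positivity

lemma prob_lt_one {Θ : Type*} {L : ℝ} (hL : 0 < L) (i j k : Θ) {t : ℝ} (ht : 0 < t) (ht1 : t < 1) :
    prob L i j k t < 1 := by
  unfold prob
  split_ifs
  · exact ht1
  · rw [Real.exp_lt_one_iff]
    have : 0 < L / t := by positivity
    linarith
  · nlinarith

lemma tendsto_div_nhdsGT_zero {L : ℝ} (hL : 0 < L) :
    Tendsto (fun t : ℝ => L / t) (𝓝[>] 0) atTop := by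
  simpa [div_eq_mul_inv] using tendsto_inv_nhdsGT_zero.const_mul_atTop hL

lemma tendsto_binKL_prob {Θ : Type*} {L : ℝ} (hL : 0 < L) {i j : Θ} (hij : i ≠ j) {k l : Θ}
    (hkl : k ≠ l) :
    Tendsto (fun t => binKL (prob L i j k t) (prob L i j l t)) (𝓝[>] 0)
      (𝓝 (if k = i ∧ l = j then L else 0)) := by
  have hid : Tendsto (fun t : ℝ => t) (𝓝[>] 0) (𝓝 0) := tendsto_nhdsWithin_of_tendsto_nhds tendsto_id
  have hpos : ∀ᶠ t : ℝ in 𝓝[>] 0, 0 < t := self_mem_nhdsWithin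
  have hdiv := tendsto_div_nhdsGT_zero hL
  have hexp : Tendsto (fun t : ℝ => Real.exp (-(L / t))) (𝓝[>] 0) (𝓝 0) :=
    Real.tendsto_exp_neg_atTop_nhds_zero.comp hdiv
  have hxexp : Tendsto (fun t : ℝ => L / t * Real.exp (-(L / t))) (𝓝[>] 0) (𝓝 0) := by
    simpa [Function.comp_def] using (Real.tendsto_pow_mul_exp_neg_atTop_nhds_zero 1).comp hdiv
  have hlog : Tendsto (fun t : ℝ => t * Real.log t) (𝓝[>] 0) (𝓝 0) := by
    simpa [Function.comp_def] using (Real.continuous_mul_log.tendsto 0).comp hid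
  have hprob : ∀ k, Tendsto (prob L i j k) (𝓝[>] 0) (𝓝 0) := by
    intro k
    unfold prob
    split_ifs
    · exact hid
    · exact hexp
    · simpa using hid.pow 2
  -- `exp (-L / t)` decays fast enough to absorb the logarithmic blow-up of `log t`
  have hexplog : Tendsto (fun t : ℝ => Real.exp (-(L / t)) * Real.log t) (𝓝[>] 0) (𝓝 0) := by
    have := (hxexp.mul hlog).const_mul L⁻¹
    simp only [mul_zero] at this
    refine this.congr' ?_
    filter_upwards [hpos] with t ht
    field_simp
  refine tendsto_binKL (hprob k) (hprob l) (hpos.mono fun t ht => prob_pos L i j k ht)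
    (hpos.mono fun t ht => prob_pos L i j l ht) ?_
  unfold prob
  by_cases hki : k = i
  · have hli : l ≠ i := fun h => hkl (hki.trans h.symm)
    by_cases hlj : l = j
    · simp only [hki, hlj, hij.symm, if_true, if_false, and_self, Real.log_exp]
      refine tendsto_const_nhds.congr' ?_
      filter_upwards [hpos] with t ht
      field_simp
    · simp only [hki, hlj, hli, if_true, if_false, and_false, Real.log_pow, neg_zero]
      have := hlog.const_mul 2
      simp only [mul_zero] at this
      exact this.congr fun t => by push_cast; ring
  · simp only [hki, false_and, if_false, neg_zero]
    by_cases hkj : k = j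
    · have hlj : l ≠ j := fun h => hkl (hkj.trans h.symm)
      simp only [hkj, hlj, if_true, if_false]
      split_ifs
      · exact hexplog
      · have := hexplog.const_mul 2
        simp only [mul_zero] at this
        exact this.congr fun t => by rw [Real.log_pow]; push_cast; ring
    · simp only [hkj, if_false]
      have h2 := hid.mul hlog
      simp only [mul_zero] at h2
      split_ifs
      · exact h2.congr fun t => by ring
      · have := hid.mul_const (-L)
        simp only [zero_mul] at this
        refine this.congr' ?_
        filter_upwards [hpos] with t ht
        rw [Real.log_exp]
        field_simp
      · have := h2.const_mul 2
        simp only [mul_zero] at this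
        exact this.congr fun t => by rw [Real.log_pow]; push_cast; ring

/-- A linear system whose matrix tends to the identity is eventually solvable, with a solution as
close as desired to the right-hand side. -/
lemma eventually_exists_mulVec_eq {E : Type*} [Fintype E] [DecidableEq E] {l : Filter ℝ}
    {M : ℝ → Matrix E E ℝ} (hM : Tendsto M l (𝓝 1)) (d : E → ℝ) {U : Set (E → ℝ)} (hU : U ∈ 𝓝 d) :
    ∀ᶠ t in l, ∃ c ∈ U, (M t).mulVec c = d := by
  have hdet : Tendsto (fun t => (M t).det) l (𝓝 1) := by
    simpa [Function.comp_def] using ((continuous_id.matrix_det).tendsto (1 : Matrix E E ℝ)).comp hM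
  have hadj : Tendsto (fun t => (M t).adjugate.mulVec d) l (𝓝 d) := by
    simpa [Function.comp_def] using
      ((continuous_id.matrix_adjugate.matrix_mulVec continuous_const).tendsto
      (1 : Matrix E E ℝ)).comp hM
  have hc : Tendsto (fun t => (M t).det⁻¹ • (M t).adjugate.mulVec d) l (𝓝 d) := by
    simpa using (hdet.inv₀ one_ne_zero).smul hadj
  filter_upwards [hc hU, hdet.eventually_ne one_ne_zero] with t ht hne
  refine ⟨_, ht, ?_⟩
  rw [Matrix.mulVec_smul, Matrix.mulVec_mulVec, Matrix.mul_adjugate, Matrix.smul_mulVec,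
    Matrix.one_mulVec, smul_smul, inv_mul_cancel₀ hne, one_smul]

/-- The law of a mixture of binary experiments: with probability `w e` the label `e` is shown
together with a Bernoulli draw of success probability `a e`, and with the remaining probability the
uninformative outcome `none` is shown. -/
noncomputable def mixture {E : Type*} [Fintype E] (w a : E → ℝ) : Option (E × Bool) → ℝ
  | none => 1 - ∑ e, w e
  | some (e, true) => w e * a e
  | some (e, false) => w e * (1 - a e)

lemma mixture_pos {E : Type*} [Fintype E] {w a : E → ℝ} (hw : ∀ e, 0 < w e) (hw1 : ∑ e, w e < 1)
    (ha : ∀ e, 0 < a e) (ha1 : ∀ e, a e < 1) (s : Option (E × Bool)) : 0 < mixture w a s := by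
  rcases s with _ | ⟨e, _ | _⟩
  · exact sub_pos.2 hw1
  · exact mul_pos (hw e) (sub_pos.2 (ha1 e))
  · exact mul_pos (hw e) (ha e)

lemma mixture_sum {E : Type*} [Fintype E] (w a : E → ℝ) : ∑ s, mixture w a s = 1 := by
  rw [Fintype.sum_option, Fintype.sum_prod_type]
  simp only [Fintype.sum_bool, mixture]
  have : ∀ e, w e * a e + w e * (1 - a e) = w e := fun e => by ring
  simp only [this, sub_add_cancel]

lemma mixture_kl {E : Type*} [Fintype E] {w : E → ℝ} (hw : ∀ e, 0 < w e) (hw1 : ∑ e, w e < 1)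
    (a b : E → ℝ) :
    ∑ s, mixture w a s * Real.log (mixture w a s / mixture w b s) =
      ∑ e, w e * binKL (a e) (b e) := by
  rw [Fintype.sum_option, Fintype.sum_prod_type]
  simp only [Fintype.sum_bool, mixture]
  rw [div_self (sub_pos.2 hw1).ne', Real.log_one, mul_zero, zero_add]
  refine Finset.sum_congr rfl fun e _ => ?_
  rw [mul_div_mul_left _ _ (hw e).ne', mul_div_mul_left _ _ (hw e).ne', binKL]
  ring

/-- For a finite set `Θ` with at least two elements and any family of
strictly positive targets `d i j` (for `i ≠ j`), there is a family of mutually absolutely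
continuous Borel probability measures on `ℝ` whose KL divergences are all finite and
satisfy `D(μ i ‖ μ j) = d i j` for all `i ≠ j`. -/
theorem stmt4 (Θ : Type*) [Fintype Θ] (hΘ : 2 ≤ Fintype.card Θ)
    (d : Θ → Θ → ℝ) (hd : ∀ i j, i ≠ j → 0 < d i j) :
    ∃ μ : Θ → Measure ℝ, (∀ i, IsProbabilityMeasure (μ i)) ∧
      (∀ i j, μ i ≪ μ j) ∧
      (∀ i j, i ≠ j → klDiv (μ i) (μ j) ≠ ⊤ ∧ klDiv (μ i) (μ j) = ENNReal.ofReal (d i j)) := by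
  let E := {e : Θ × Θ // e.1 ≠ e.2}
  let D : E → ℝ := fun e => d e.1.1 e.1.2
  have hD : ∀ e, 0 < D e := fun e => hd _ _ e.2
  obtain ⟨L, hL, hDL⟩ : ∃ L : ℝ, 0 < L ∧ ∑ e, D e < L :=
    ⟨∑ e, D e + 1, by have := Finset.sum_nonneg fun e (_ : e ∈ Finset.univ) => (hD e).le; linarith,
      by linarith⟩
  let a : ℝ → Θ → E → ℝ := fun t k e => prob L e.1.1 e.1.2 k t
  let M : ℝ → Matrix E E ℝ := fun t =>
    Matrix.of fun x e => binKL (a t x.1.1 e) (a t x.1.2 e) / L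
  have hM : Tendsto M (𝓝[>] 0) (𝓝 1) := by
    refine tendsto_pi_nhds.2 fun x => tendsto_pi_nhds.2 fun e => ?_
    have h := (tendsto_binKL_prob hL e.2 x.2).div_const L
    suffices hlim : (1 : Matrix E E ℝ) x e =
        (if x.1.1 = e.1.1 ∧ x.1.2 = e.1.2 then L else 0) / L by
      rw [hlim]
      exact h
    rw [Matrix.one_apply]
    have hiff : x = e ↔ x.1.1 = e.1.1 ∧ x.1.2 = e.1.2 := by rw [Subtype.ext_iff, Prod.ext_iff]
    by_cases hxe : x = e
    · rw [if_pos hxe, if_pos (hiff.1 hxe), div_self hL.ne']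
    · rw [if_neg hxe, if_neg (mt hiff.2 hxe), zero_div]
  have hU : {c : E → ℝ | (∀ e, 0 < c e) ∧ ∑ e, c e < L} ∈ 𝓝 D := by
    have hsum : Continuous fun c : E → ℝ => ∑ e, c e :=
      continuous_finsetSum _ fun e _ => continuous_apply e
    exact (Filter.eventually_all.2 fun e =>
      (continuous_apply e).continuousAt.eventually_const_lt (hD e)).and
      (hsum.continuousAt.eventually_lt_const hDL)
  have h01 : ∀ᶠ t : ℝ in 𝓝[>] 0, t ∈ Set.Ioo (0 : ℝ) 1 := Ioo_mem_nhdsGT one_pos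
  obtain ⟨t, ⟨c, ⟨hc, hcL⟩, hMc⟩, ht0, ht1⟩ :=
    ((eventually_exists_mulVec_eq hM D hU).and h01).exists
  let w : E → ℝ := fun e => c e / L
  have hw : ∀ e, 0 < w e := fun e => div_pos (hc e) hL
  have hw1 : ∑ e, w e < 1 := by
    rw [← Finset.sum_div, div_lt_one hL]
    exact hcL
  have ha : ∀ k e, 0 < a t k e := fun k e => prob_pos L _ _ k ht0
  have ha1 : ∀ k e, a t k e < 1 := fun k e => prob_lt_one hL _ _ k ht0 ht1
  have hp : ∀ k s, 0 < mixture w (a t k) s := fun k => mixture_pos hw hw1 (ha k) (ha1 k)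
  obtain ⟨f, hf⟩ : ∃ f : Option (E × Bool) → ℝ, Function.Injective f :=
    ⟨fun s => ((Fintype.equivFin _ s : ℕ) : ℝ), Nat.cast_injective.comp
      (Fin.val_injective.comp (Equiv.injective _))⟩
  have key : ∀ i j, i ≠ j → klDiv (atomic f (mixture w (a t i))) (atomic f (mixture w (a t j))) =
      ENNReal.ofReal (d i j) := by
    intro i j hij
    rw [klDiv_atomic hf (hp i) (hp j) (mixture_sum _ _) (mixture_sum _ _), mixture_kl hw hw1]
    congr 1
    have h := congrFun hMc ⟨(i, j), hij⟩
    change _ = d i j at h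
    rw [← h]
    simp only [Matrix.mulVec, dotProduct, M, Matrix.of_apply, w]
    exact Finset.sum_congr rfl fun e _ => by ring
  refine ⟨fun i => atomic f (mixture w (a t i)),
    fun i => isProbabilityMeasure_atomic f (hp i) (mixture_sum _ _),
    fun i j => atomic_ac f _ (hp j), fun i j hij => ⟨?_, key i j hij⟩⟩
  rw [key i j hij]
  exact ENNReal.ofReal_ne_top
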